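/- arXiv:2303.07002 — 8 statements merged into one kernel-verified Lean document; each statement's English description precedes it below -/
import Mathlib

section
/- For every s ∈ [s0, s1], the point γ_s satisfies ‖p − γ_s‖² = s; consequently the function s ↦ ‖p − γ_s‖² is strictly increasing on [s0, s1]. -/
/-!
If `‖p - γ s‖ < √s`, then `closedBall p √s` is a neighbourhood of `γ s`, so `γ s` is a local minimum
on `V` of the convex function `‖q - ·‖`, hence a global one. Strict convexity of the norm makes the
nearest point unique, so `γ s = qhat`, and then `‖p - qhat‖ < √s ≤ √s1 = ‖p - qhat‖`.
-/

open Set Filter Topology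

theorem isLocalMinOn_of_isMinOn_inter_of_mem_nhds {X β : Type*} [TopologicalSpace X] [Preorder β]
    {f : X → β} {V U : Set X} {a : X} (hU : U ∈ 𝓝 a) (hmin : IsMinOn f (V ∩ U) a) :
    IsLocalMinOn f V a :=
  hmin.filter_mono <| le_principal_iff.2 <| inter_mem_nhdsWithin V hU

theorem convexOn_norm_sub_left {E : Type*} [SeminormedAddCommGroup E] [NormedSpace ℝ E]
    {V : Set E} (hV : Convex ℝ V) (q : E) : ConvexOn ℝ V fun x => ‖q - x‖ := by
  simpa only [dist_eq_norm'] using convexOn_dist q hV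

section NearestPoint

variable {E : Type*} [NormedAddCommGroup E] [NormedSpace ℝ E] [StrictConvexSpace ℝ E]
  {V : Set E} {p q a b : E} {r : ℝ}

theorem eq_of_isMinOn_norm_sub (hV : Convex ℝ V) (ha : a ∈ V) (hb : b ∈ V)
    (ha_min : IsMinOn (‖q - ·‖) V a) (hb_min : IsMinOn (‖q - ·‖) V b) : a = b := by
  by_contra hab
  have hdist : ‖q - a‖ = ‖q - b‖ := le_antisymm (ha_min hb) (hb_min ha)
  have hmid : midpoint ℝ a b ∈ Metric.ball q ‖q - b‖ :=
    openSegment_subset_ball_of_ne (mem_closedBall_iff_norm'.2 hdist.le)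
      (mem_closedBall_iff_norm'.2 le_rfl) hab (midpoint_mem_openSegment a b)
  exact (hb_min (hV.midpoint_mem ha hb)).not_gt (mem_ball_iff_norm'.1 hmid)

theorem norm_sub_eq_of_isMinOn_inter_closedBall (hV : Convex ℝ V) (hb : b ∈ V)
    (hb_min : IsMinOn (‖q - ·‖) V b) (hr : r ≤ ‖p - b‖) (ha : a ∈ V ∩ Metric.closedBall p r)
    (ha_min : IsMinOn (‖q - ·‖) (V ∩ Metric.closedBall p r) a) : ‖p - a‖ = r := by
  have ha_le : ‖p - a‖ ≤ r := mem_closedBall_iff_norm'.1 ha.2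
  refine ha_le.antisymm (le_of_not_gt fun ha_lt => ?_)
  have hball : Metric.closedBall p r ∈ 𝓝 a :=
    Metric.closedBall_mem_nhds_of_mem (mem_ball_iff_norm'.2 ha_lt)
  have ha_minV : IsMinOn (‖q - ·‖) V a :=
    .of_isLocalMinOn_of_convexOn ha.1 (isLocalMinOn_of_isMinOn_inter_of_mem_nhds hball ha_min)
      (convexOn_norm_sub_left hV q)
  have hab : a = b := eq_of_isMinOn_norm_sub hV ha.1 hb ha_minV hb_min
  exact (hab ▸ hr).not_gt ha_lt

theorem stmt_1_general (hV : Convex ℝ V) {qhat : E} (hqhat_mem : qhat ∈ V)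
    (hqhat_min : ∀ y ∈ V, ‖q - qhat‖ ≤ ‖q - y‖) {S : Set ℝ}
    (hS : S ⊆ Icc 0 (‖p - qhat‖ ^ 2)) {γ : ℝ → E}
    (hγmem : ∀ s ∈ S, γ s ∈ V ∩ Metric.closedBall p √s)
    (hγmin : ∀ s ∈ S, ∀ y ∈ V ∩ Metric.closedBall p √s, ‖q - γ s‖ ≤ ‖q - y‖) :
    (∀ s ∈ S, ‖p - γ s‖ ^ 2 = s) ∧ StrictMonoOn (fun s => ‖p - γ s‖ ^ 2) S := by
  have hγ_sq : ∀ s ∈ S, ‖p - γ s‖ ^ 2 = s := fun s hs => by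
    have hsqrt_le : √s ≤ ‖p - qhat‖ := Real.sqrt_le_iff.2 ⟨norm_nonneg _, (hS hs).2⟩
    rw [norm_sub_eq_of_isMinOn_inter_closedBall hV hqhat_mem hqhat_min hsqrt_le (hγmem s hs)
      (hγmin s hs), Real.sq_sqrt (hS hs).1]
  exact ⟨hγ_sq, strictMonoOn_id.congr fun s hs => (hγ_sq s hs).symm⟩

end NearestPoint

/-- For every s ∈ [s0, s1], ‖p − γ_s‖² = s; consequently
s ↦ ‖p − γ_s‖² is strictly increasing on [s0, s1]. -/
theorem stmt_1 {d : ℕ} (V : Set (EuclideanSpace ℝ (Fin d)))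
    (hVne : V.Nonempty) (hVcl : IsClosed V) (hVcx : Convex ℝ V)
    (p q phat qhat : EuclideanSpace ℝ (Fin d))
    (hphat_mem : phat ∈ V) (hphat_min : ∀ y ∈ V, ‖p - phat‖ ≤ ‖p - y‖)
    (hqhat_mem : qhat ∈ V) (hqhat_min : ∀ y ∈ V, ‖q - qhat‖ ≤ ‖q - y‖)
    (s0 s1 : ℝ)
    (hs0 : s0 = ‖p - phat‖ ^ 2) (hs1 : s1 = ‖p - qhat‖ ^ 2)
    (γ : ℝ → EuclideanSpace ℝ (Fin d))
    (hγmem : ∀ s ∈ Set.Icc s0 s1, γ s ∈ V ∩ Metric.closedBall p (Real.sqrt s))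
    (hγmin : ∀ s ∈ Set.Icc s0 s1,
      ∀ y ∈ V ∩ Metric.closedBall p (Real.sqrt s), ‖q - γ s‖ ≤ ‖q - y‖) :
    (∀ s ∈ Set.Icc s0 s1, ‖p - γ s‖ ^ 2 = s) ∧
    StrictMonoOn (fun s => ‖p - γ s‖ ^ 2) (Set.Icc s0 s1) :=
  stmt_1_general hVcx hqhat_mem hqhat_min
    (hs1 ▸ Set.Icc_subset_Icc_left (hs0 ▸ sq_nonneg _)) hγmem hγmin
end

section
/- The map γ : [s0, s1] → ℝ^d, s ↦ γ_s, is continuous and injective. -/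
/-!
Write `r = √s` and `x = γ s`. If `x` were interior to the ball `B(p, r)`, it would be a local, hence
by convexity a global, nearest point to `q` in `V`, so `x = q̂`, which is impossible as
`r ≤ ‖p - q̂‖`. Thus `‖p - γ s‖² = s`, and `γ` is injective.

For the modulus of continuity, exchange objective and constraint: `x` is also the nearest point
to `p` in `V ∩ B(q, ‖q - x‖)`. This set is convex and contains `γ t` for `t ≥ s`, so the obtuse
angle at `γ s` gives `‖p - γ s‖² + ‖γ t - γ s‖² ≤ ‖p - γ t‖²`, that is, `‖γ t - γ s‖² ≤ t - s`.
-/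

open Set Metric Topology
open scoped NNReal

theorem holderOnWith_half_of_dist_sq_le {X Y : Type*} [PseudoMetricSpace X] [PseudoMetricSpace Y]
    {C : ℝ≥0} {f : X → Y} {S : Set X}
    (h : ∀ x ∈ S, ∀ y ∈ S, dist (f x) (f y) ^ 2 ≤ C ^ 2 * dist x y) :
    HolderOnWith C (1 / 2) f S := by
  intro x hx y hy
  have hnndist : nndist (f x) (f y) ≤ C * nndist x y ^ (1 / 2 : ℝ) := by
    rw [← NNReal.sqrt_eq_rpow, ← NNReal.sqrt_sq C, ← NNReal.sqrt_mul, NNReal.le_sqrt_iff_sq_le]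
    exact_mod_cast h x hx y hy
  rw [edist_nndist, edist_nndist, NNReal.coe_div, NNReal.coe_one, NNReal.coe_ofNat,
    ← ENNReal.coe_rpow_of_nonneg _ (by norm_num)]
  exact_mod_cast hnndist

/-- `x` is a point of `A` nearest to `q`. This is a predicate rather than a projection map, so that
neither existence nor uniqueness has to be established before it can be used. -/
structure IsNearestPoint {E : Type*} [SeminormedAddCommGroup E] (A : Set E) (q x : E) : Prop where
  mem : x ∈ A
  norm_sub_le : ∀ y ∈ A, ‖q - x‖ ≤ ‖q - y‖

namespace IsNearestPoint

theorem of_inter_of_mem_nhds {E : Type*} [SeminormedAddCommGroup E] [NormedSpace ℝ E]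
    {A U : Set E} {q x : E} (hA : Convex ℝ A) (hU : U ∈ 𝓝 x) (hx : IsNearestPoint (A ∩ U) q x) :
    IsNearestPoint A q x := by
  have hlocal : IsLocalMinOn (dist · q) A x := by
    filter_upwards [inter_mem_nhdsWithin A hU] with y hy
    simpa only [dist_eq_norm'] using hx.norm_sub_le y hy
  have hglobal := IsMinOn.of_isLocalMinOn_of_convexOn hx.mem.1 hlocal (convexOn_dist q hA)
  refine ⟨hx.mem.1, fun y hy ↦ ?_⟩
  simpa only [dist_eq_norm'] using isMinOn_iff.mp hglobal y hy

variable {E : Type*} [NormedAddCommGroup E] [InnerProductSpace ℝ E] {A V : Set E} {p q x y : E}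
  {r : ℝ}

theorem inner_sub_sub_nonpos (hA : Convex ℝ A) (hx : IsNearestPoint A q x) (hy : y ∈ A) :
    inner ℝ (q - x) (y - x) ≤ 0 := by
  have : Nonempty A := ⟨x, hx.mem⟩
  have hinf : ‖q - x‖ = ⨅ w : A, ‖q - w‖ :=
    le_antisymm (le_ciInf fun w ↦ hx.norm_sub_le w w.2)
      (ciInf_le ⟨0, forall_mem_range.2 fun _ ↦ norm_nonneg _⟩ (⟨x, hx.mem⟩ : A))
  exact (norm_eq_iInf_iff_real_inner_le_zero hA hx.mem).1 hinf y hy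

theorem norm_sub_sq_add_norm_sub_sq_le (hA : Convex ℝ A) (hx : IsNearestPoint A q x)
    (hy : y ∈ A) : ‖q - x‖ ^ 2 + ‖y - x‖ ^ 2 ≤ ‖q - y‖ ^ 2 := by
  have hangle := hx.inner_sub_sub_nonpos hA hy
  have hexpand := norm_sub_sq_real (q - x) (y - x)
  rw [sub_sub_sub_cancel_right] at hexpand
  linarith

theorem eq_of_norm_sub_le (hA : Convex ℝ A) (hx : IsNearestPoint A q x) (hy : y ∈ A)
    (hyx : ‖q - y‖ ≤ ‖q - x‖) : y = x := by
  have hpyth := hx.norm_sub_sq_add_norm_sub_sq_le hA hy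
  have hsq : ‖q - y‖ ^ 2 ≤ ‖q - x‖ ^ 2 := by gcongr
  have hzero : ‖y - x‖ ^ 2 = 0 := le_antisymm (by linarith) (sq_nonneg _)
  simpa only [sq_eq_zero_iff, norm_eq_zero, sub_eq_zero] using hzero

theorem norm_sub_eq_radius (hV : Convex ℝ V) (hx : IsNearestPoint (V ∩ closedBall p r) q x)
    (hy : IsNearestPoint V q y) (hr : r ≤ ‖p - y‖) : ‖p - x‖ = r := by
  have hle : ‖p - x‖ ≤ r := mem_closedBall_iff_norm'.1 hx.mem.2
  refine hle.eq_of_not_lt fun hlt ↦ ?_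
  have hnhds : closedBall p r ∈ 𝓝 x := closedBall_mem_nhds_of_mem (mem_ball_iff_norm'.2 hlt)
  have hxV : IsNearestPoint V q x := of_inter_of_mem_nhds hV hnhds hx
  have hxy : x = y := hy.eq_of_norm_sub_le hV hxV.mem (hxV.norm_sub_le y hy.mem)
  exact hr.not_gt (hxy ▸ hlt)

theorem swap_center (hV : Convex ℝ V) (hx : IsNearestPoint (V ∩ closedBall p r) q x) :
    IsNearestPoint (V ∩ closedBall q ‖q - x‖) p x := by
  refine ⟨⟨hx.mem.1, mem_closedBall_iff_norm'.2 le_rfl⟩, fun y hy ↦ ?_⟩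
  by_contra! hlt
  have hmem : y ∈ V ∩ closedBall p r :=
    ⟨hy.1, mem_closedBall_iff_norm'.2 (hlt.le.trans (mem_closedBall_iff_norm'.1 hx.mem.2))⟩
  have hyx : y = x := hx.eq_of_norm_sub_le (hV.inter (convex_closedBall p r)) hmem
    (mem_closedBall_iff_norm'.1 hy.2)
  exact hlt.ne (by rw [hyx])

end IsNearestPoint

/-- `γ` is the minimizing path of `(V, p, q)` on the parameter set `S`: for `s ∈ S`, the point `γ s`
is nearest to `q` among the points of `V` at squared distance at most `s` from `p`. For
`s < 0` the radius `√s` is `0`, so `S` should consist of nonnegative reals. -/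
def IsMinimizingPathOn {E : Type*} [SeminormedAddCommGroup E] (V : Set E) (p q : E) (γ : ℝ → E)
    (S : Set ℝ) : Prop :=
  ∀ s ∈ S, IsNearestPoint (V ∩ closedBall p √s) q (γ s)

namespace IsMinimizingPathOn

variable {E : Type*} [NormedAddCommGroup E] [InnerProductSpace ℝ E] {V : Set E} {p q qhat : E}
  {γ : ℝ → E} {S : Set ℝ} {s t : ℝ}

theorem norm_sub_sq_eq (hV : Convex ℝ V) (hqhat : IsNearestPoint V q qhat)
    (hS : S ⊆ Icc 0 (‖p - qhat‖ ^ 2)) (hγ : IsMinimizingPathOn V p q γ S) (hs : s ∈ S) :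
    ‖p - γ s‖ ^ 2 = s := by
  have hradius : √s ≤ ‖p - qhat‖ := (Real.sqrt_le_left (norm_nonneg _)).2 (hS hs).2
  rw [(hγ s hs).norm_sub_eq_radius hV hqhat hradius, Real.sq_sqrt (hS hs).1]

theorem norm_sub_sq_add_norm_sub_sq_le (hV : Convex ℝ V) (hγ : IsMinimizingPathOn V p q γ S)
    (hs : s ∈ S) (ht : t ∈ S) (hst : s ≤ t) :
    ‖p - γ s‖ ^ 2 + ‖γ t - γ s‖ ^ 2 ≤ ‖p - γ t‖ ^ 2 := by
  have hball : V ∩ closedBall p √s ⊆ V ∩ closedBall p √t :=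
    inter_subset_inter_right V (closedBall_subset_closedBall (Real.sqrt_le_sqrt hst))
  have hnorm : ‖q - γ t‖ ≤ ‖q - γ s‖ := (hγ t ht).norm_sub_le _ (hball (hγ s hs).mem)
  exact ((hγ s hs).swap_center hV).norm_sub_sq_add_norm_sub_sq_le
    (hV.inter (convex_closedBall _ _)) ⟨(hγ t ht).mem.1, mem_closedBall_iff_norm'.2 hnorm⟩

theorem dist_sq_le (hV : Convex ℝ V) (hqhat : IsNearestPoint V q qhat)
    (hS : S ⊆ Icc 0 (‖p - qhat‖ ^ 2)) (hγ : IsMinimizingPathOn V p q γ S) (hs : s ∈ S)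
    (ht : t ∈ S) : dist (γ s) (γ t) ^ 2 ≤ dist s t := by
  wlog hst : s ≤ t generalizing s t
  · simpa only [dist_comm] using this ht hs (le_of_not_ge hst)
  have hpyth := hγ.norm_sub_sq_add_norm_sub_sq_le hV hs ht hst
  rw [hγ.norm_sub_sq_eq hV hqhat hS hs, hγ.norm_sub_sq_eq hV hqhat hS ht] at hpyth
  rw [dist_eq_norm', Real.dist_eq, abs_sub_comm, abs_of_nonneg (sub_nonneg.2 hst)]
  linarith

theorem holderOnWith (hV : Convex ℝ V) (hqhat : IsNearestPoint V q qhat)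
    (hS : S ⊆ Icc 0 (‖p - qhat‖ ^ 2)) (hγ : IsMinimizingPathOn V p q γ S) :
    HolderOnWith 1 (1 / 2) γ S :=
  holderOnWith_half_of_dist_sq_le fun s hs t ht ↦ by
    simpa only [NNReal.coe_one, one_pow, one_mul] using hγ.dist_sq_le hV hqhat hS hs ht

theorem injOn (hV : Convex ℝ V) (hqhat : IsNearestPoint V q qhat)
    (hS : S ⊆ Icc 0 (‖p - qhat‖ ^ 2)) (hγ : IsMinimizingPathOn V p q γ S) : InjOn γ S :=
  LeftInvOn.injOn (f₁' := fun x ↦ ‖p - x‖ ^ 2) fun _ hs ↦ hγ.norm_sub_sq_eq hV hqhat hS hs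

end IsMinimizingPathOn

theorem stmt_2_general {E : Type*} [NormedAddCommGroup E] [InnerProductSpace ℝ E] {V : Set E}
    (hV : Convex ℝ V) {p q qhat : E} (hqhat : IsNearestPoint V q qhat) {S : Set ℝ}
    (hS : S ⊆ Icc 0 (‖p - qhat‖ ^ 2)) {γ : ℝ → E} (hγ : IsMinimizingPathOn V p q γ S) :
    HolderOnWith 1 (1 / 2) γ S ∧ InjOn γ S :=
  ⟨hγ.holderOnWith hV hqhat hS, hγ.injOn hV hqhat hS⟩

/-- The map γ : [s0, s1] → ℝ^d, s ↦ γ_s, is continuous and injective. -/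
theorem stmt_2 {d : ℕ} (V : Set (EuclideanSpace ℝ (Fin d)))
    (hVne : V.Nonempty) (hVcl : IsClosed V) (hVcx : Convex ℝ V)
    (p q phat qhat : EuclideanSpace ℝ (Fin d))
    (hphat_mem : phat ∈ V) (hphat_min : ∀ y ∈ V, ‖p - phat‖ ≤ ‖p - y‖)
    (hqhat_mem : qhat ∈ V) (hqhat_min : ∀ y ∈ V, ‖q - qhat‖ ≤ ‖q - y‖)
    (s0 s1 : ℝ)
    (hs0 : s0 = ‖p - phat‖ ^ 2) (hs1 : s1 = ‖p - qhat‖ ^ 2)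
    (γ : ℝ → EuclideanSpace ℝ (Fin d))
    (hγmem : ∀ s ∈ Set.Icc s0 s1, γ s ∈ V ∩ Metric.closedBall p (Real.sqrt s))
    (hγmin : ∀ s ∈ Set.Icc s0 s1,
      ∀ y ∈ V ∩ Metric.closedBall p (Real.sqrt s), ‖q - γ s‖ ≤ ‖q - y‖) :
    ContinuousOn γ (Set.Icc s0 s1) ∧ Set.InjOn γ (Set.Icc s0 s1) :=
  (stmt_2_general hVcx ⟨hqhat_mem, hqhat_min⟩ (Icc_subset_Icc (hs0 ▸ sq_nonneg _) hs1.le)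
    fun s hs ↦ ⟨hγmem s hs, hγmin s hs⟩).imp_left fun hγ ↦ hγ.continuousOn (by norm_num)
end

section
/- Bridge lemma, first part: for every point x of the bridge of (V, p, q), setting s := ‖x − p‖², one has s0 ≤ s ≤ s1 and x = γ_s. In particular, the bridge is contained in the image of the minimizing path γ. -/
/-!
If `x` lies between `p` and `q`, the closed balls around `p` and `q` through `x` touch only at `x`,
by strict convexity. A point of `V` nearest to `q` subject to being no further from `p` than `x`
lies in both balls, hence equals `x`. The upper bound on the parameter only needs the triangle
inequality: `x` realizes it as an equality, so a point closer to `q` cannot be closer to `p`.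
-/

open Metric Set

/-- `x` is a point of `V` at minimal distance from `a`, i.e. a metric projection of `a` to `V`.
It is a predicate on `x` because such a point need neither exist nor be unique for a general `V`. -/
def IsNearestPoint_s7 {P : Type*} [PseudoMetricSpace P] (V : Set P) (a x : P) : Prop :=
  x ∈ V ∧ ∀ y ∈ V, dist a x ≤ dist a y

theorem IsNearestPoint_s7.dist_le_of_dist_add_dist_eq {P : Type*} [PseudoMetricSpace P] {V : Set P}
    {p q x y : P} (hy : IsNearestPoint_s7 V q y) (hxV : x ∈ V)
    (hx : dist p x + dist x q = dist p q) : dist p x ≤ dist p y := by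
  have hqy : dist y q ≤ dist x q := by
    simpa only [dist_comm q] using hy.2 x hxV
  linarith [dist_triangle p y q]

section StrictConvexSpace

variable {E P : Type*} [NormedAddCommGroup E] [NormedSpace ℝ E] [StrictConvexSpace ℝ E]
  [MetricSpace P] [NormedAddTorsor E P]

theorem closedBall_inter_closedBall_eq_singleton_of_wbtw {p x q : P} (hx : Wbtw ℝ p x q) :
    closedBall p (dist x p) ∩ closedBall q (dist x q) = {x} := by
  refine Subset.antisymm ?_ (by simp)
  rintro y ⟨hyp : dist y p ≤ dist x p, hyq : dist y q ≤ dist x q⟩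
  obtain ⟨t, ⟨ht0, ht1⟩, rfl⟩ := hx
  rw [dist_lineMap_left, Real.norm_of_nonneg ht0] at hyp
  rw [dist_lineMap_right, Real.norm_of_nonneg (sub_nonneg.2 ht1)] at hyq
  have htriangle : dist p q ≤ dist y p + dist y q := dist_triangle_left p q y
  exact eq_lineMap_of_dist_eq_mul_of_dist_eq_mul (by rw [dist_comm p y]; linarith) (by linarith)

theorem IsNearestPoint_s7.eq_of_wbtw {V : Set P} {p q x y : P}
    (hy : IsNearestPoint_s7 (V ∩ closedBall p (dist x p)) q y) (hxV : x ∈ V) (hx : Wbtw ℝ p x q) :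
    y = x := by
  have hyq : y ∈ closedBall q (dist x q) := by
    simpa only [mem_closedBall, dist_comm _ q] using hy.2 x ⟨hxV, mem_closedBall.2 le_rfl⟩
  have hmem : y ∈ closedBall p (dist x p) ∩ closedBall q (dist x q) := ⟨hy.1.2, hyq⟩
  rwa [closedBall_inter_closedBall_eq_singleton_of_wbtw hx] at hmem

theorem stmt_7_general {V : Set P} {p q phat qhat : P} (hphat : IsNearestPoint_s7 V p phat)
    (hqhat : IsNearestPoint_s7 V q qhat) {γ : ℝ → P}
    (hγ : ∀ s ∈ Icc (dist p phat ^ 2) (dist p qhat ^ 2),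
      IsNearestPoint_s7 (V ∩ closedBall p (√s)) q (γ s)) :
    (∀ x ∈ V ∩ affineSegment ℝ p q,
      dist p phat ^ 2 ≤ dist x p ^ 2 ∧ dist x p ^ 2 ≤ dist p qhat ^ 2 ∧ x = γ (dist x p ^ 2)) ∧
    V ∩ affineSegment ℝ p q ⊆ γ '' Icc (dist p phat ^ 2) (dist p qhat ^ 2) := by
  have hbridge : ∀ x ∈ V ∩ affineSegment ℝ p q,
      dist p phat ^ 2 ≤ dist x p ^ 2 ∧ dist x p ^ 2 ≤ dist p qhat ^ 2 ∧
        x = γ (dist x p ^ 2) := by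
    rintro x ⟨hxV, hx : Wbtw ℝ p x q⟩
    have hlower : dist p phat ^ 2 ≤ dist x p ^ 2 := by
      rw [dist_comm x p]
      gcongr
      exact hphat.2 x hxV
    have hupper : dist x p ^ 2 ≤ dist p qhat ^ 2 := by
      rw [dist_comm x p]
      gcongr
      exact hqhat.dist_le_of_dist_add_dist_eq hxV hx.dist_add_dist
    have hnearest := hγ _ ⟨hlower, hupper⟩
    rw [Real.sqrt_sq dist_nonneg] at hnearest
    exact ⟨hlower, hupper, (hnearest.eq_of_wbtw hxV hx).symm⟩
  refine ⟨hbridge, fun x hx ↦ ?_⟩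
  obtain ⟨hlower, hupper, hxγ⟩ := hbridge x hx
  exact ⟨_, ⟨hlower, hupper⟩, hxγ.symm⟩

end StrictConvexSpace

/-- Bridge lemma, first part. For every point x of the bridge V ∩ [p,q],
setting s := ‖x − p‖², one has s0 ≤ s ≤ s1 and x = γ_s; in particular the bridge is
contained in the image of the minimizing path γ. -/
theorem stmt_7 {d : ℕ} (V : Set (EuclideanSpace ℝ (Fin d)))
    (hVne : V.Nonempty) (hVcl : IsClosed V) (hVcx : Convex ℝ V)
    (p q phat qhat : EuclideanSpace ℝ (Fin d))
    (hphat_mem : phat ∈ V) (hphat_min : ∀ y ∈ V, ‖p - phat‖ ≤ ‖p - y‖)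
    (hqhat_mem : qhat ∈ V) (hqhat_min : ∀ y ∈ V, ‖q - qhat‖ ≤ ‖q - y‖)
    (s0 s1 : ℝ)
    (hs0 : s0 = ‖p - phat‖ ^ 2) (hs1 : s1 = ‖p - qhat‖ ^ 2)
    (γ : ℝ → EuclideanSpace ℝ (Fin d))
    (hγmem : ∀ s ∈ Set.Icc s0 s1, γ s ∈ V ∩ Metric.closedBall p (Real.sqrt s))
    (hγmin : ∀ s ∈ Set.Icc s0 s1,
      ∀ y ∈ V ∩ Metric.closedBall p (Real.sqrt s), ‖q - γ s‖ ≤ ‖q - y‖) :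
    (∀ x ∈ V ∩ segment ℝ p q,
      s0 ≤ ‖x - p‖ ^ 2 ∧ ‖x - p‖ ^ 2 ≤ s1 ∧ x = γ (‖x - p‖ ^ 2)) ∧
    V ∩ segment ℝ p q ⊆ γ '' Set.Icc s0 s1 := by
  subst hs0 hs1
  simp only [← dist_eq_norm, ← affineSegment_eq_segment] at *
  exact stmt_7_general ⟨hphat_mem, hphat_min⟩ ⟨hqhat_mem, hqhat_min⟩
    fun s hs ↦ ⟨hγmem s hs, hγmin s hs⟩
end

section
/- Bridge lemma, second part: for every s ∈ [s0, s1], if γ_s lies in the topological interior of V, then γ_s lies on the segment [p, q], hence on the bridge of (V, p, q). -/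
/-!
Near a point of the interior of `V`, minimizing over `V ∩ closedBall p r` is the same as minimizing
over the ball alone, and by convexity of the distance to `q` the local minimum over the ball is
global. A point of the ball nearest to `q` achieves equality in the triangle inequality from `p` to
`q`, which in a strictly convex space puts it on the segment.
-/

open Metric Topology

theorem isLocalMinOn_of_isLocalMinOn_inter {X β : Type*} [TopologicalSpace X] [Preorder β]
    {f : X → β} {s t : Set X} {x : X} (hs : s ∈ 𝓝[t] x) (h : IsLocalMinOn f (s ∩ t) x) :
    IsLocalMinOn f t x :=
  h.filter_mono (nhdsWithin_inter_of_mem hs).ge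

section ClosedBall

variable {E : Type*} {p q x : E} {r : ℝ}

theorem dist_add_dist_eq_of_isMinOn_closedBall [SeminormedAddCommGroup E] [NormedSpace ℝ E]
    (hx : x ∈ closedBall p r) (hmin : IsMinOn (dist · q) (closedBall p r) x) :
    dist p x + dist x q = dist p q := by
  have hpx : dist p x ≤ r := mem_closedBall'.1 hx
  refine le_antisymm ?_ (dist_triangle p x q)
  rcases le_total (dist p q) r with hq | hq
  · have hxq : dist x q ≤ dist q q := hmin (mem_closedBall'.2 hq)
    rw [dist_self] at hxq
    linarith [dist_triangle_right p x q]
  · obtain ⟨y, hpy, hyq⟩ : ∃ y, dist p y ≤ r ∧ dist y q ≤ dist p q - r :=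
      exists_dist_le_le (dist_nonneg.trans hpx) (sub_nonneg.2 hq) (sub_add_cancel _ r).ge
    have hxy : dist x q ≤ dist y q := hmin (mem_closedBall'.2 hpy)
    linarith

theorem mem_segment_of_isLocalMinOn_closedBall [NormedAddCommGroup E] [NormedSpace ℝ E]
    [StrictConvexSpace ℝ E] (hx : x ∈ closedBall p r)
    (hmin : IsLocalMinOn (dist · q) (closedBall p r) x) : x ∈ segment ℝ p q := by
  have hglobal : IsMinOn (dist · q) (closedBall p r) x :=
    .of_isLocalMinOn_of_convexOn hx hmin (convexOn_dist q (convex_closedBall p r))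
  exact mem_segment_iff_wbtw.2 <|
    dist_add_dist_eq_iff.1 (dist_add_dist_eq_of_isMinOn_closedBall hx hglobal)

end ClosedBall

theorem stmt_8_general {E : Type*} [NormedAddCommGroup E] [NormedSpace ℝ E]
    [StrictConvexSpace ℝ E] {V : Set E} {p q x : E} {r : ℝ} (hxV : x ∈ interior V)
    (hx : x ∈ closedBall p r) (hmin : ∀ y ∈ V ∩ closedBall p r, ‖q - x‖ ≤ ‖q - y‖) :
    x ∈ segment ℝ p q := by
  have hdist : IsMinOn (dist · q) (V ∩ closedBall p r) x :=
    isMinOn_iff.2 fun y hy ↦ by simpa only [dist_eq_norm'] using hmin y hy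
  exact mem_segment_of_isLocalMinOn_closedBall hx <|
    isLocalMinOn_of_isLocalMinOn_inter
      (mem_nhdsWithin_of_mem_nhds (mem_interior_iff_mem_nhds.1 hxV)) hdist.localize

/-- Bridge lemma, second part. For every s ∈ [s0, s1], if γ_s lies in the
topological interior of V, then γ_s lies on the segment [p, q], hence on the bridge
V ∩ [p, q] of (V, p, q). -/
theorem stmt_8 {d : ℕ} (V : Set (EuclideanSpace ℝ (Fin d)))
    (hVne : V.Nonempty) (hVcl : IsClosed V) (hVcx : Convex ℝ V)
    (p q phat qhat : EuclideanSpace ℝ (Fin d))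
    (hphat_mem : phat ∈ V) (hphat_min : ∀ y ∈ V, ‖p - phat‖ ≤ ‖p - y‖)
    (hqhat_mem : qhat ∈ V) (hqhat_min : ∀ y ∈ V, ‖q - qhat‖ ≤ ‖q - y‖)
    (s0 s1 : ℝ)
    (hs0 : s0 = ‖p - phat‖ ^ 2) (hs1 : s1 = ‖p - qhat‖ ^ 2)
    (γ : ℝ → EuclideanSpace ℝ (Fin d))
    (hγmem : ∀ s ∈ Set.Icc s0 s1, γ s ∈ V ∩ Metric.closedBall p (Real.sqrt s))
    (hγmin : ∀ s ∈ Set.Icc s0 s1,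
      ∀ y ∈ V ∩ Metric.closedBall p (Real.sqrt s), ‖q - γ s‖ ≤ ‖q - y‖) :
    ∀ s ∈ Set.Icc s0 s1, γ s ∈ interior V →
      γ s ∈ segment ℝ p q ∧ γ s ∈ V ∩ segment ℝ p q := by
  intro s hs hint
  have hseg := stmt_8_general hint (hγmem s hs).2 (hγmin s hs)
  exact ⟨hseg, (hγmem s hs).1, hseg⟩
end

section
/- Let d ≥ 2, let p ≠ q in ℝ^d, let ρ > 0, and let S be the sphere of radius ρ centered at p. If x ∈ S is a local minimum of the function y ↦ ‖y − q‖ restricted to S (i.e., there is a neighborhood U of x in ℝ^d with ‖x − q‖ ≤ ‖y − q‖ for all y ∈ S ∩ U), then x = p + ρ·(q − p)/‖q − p‖. -/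
/-!
On the sphere of centre `p` and radius `ρ` we have
`‖y - q‖² = ρ² - 2⟪y - p, q - p⟫ + ‖q - p‖²`, so `x` is a local maximum on the sphere of the linear
functional `⟪·, q - p⟫`. Along the great circle `t ↦ p + cos t • (x - p) + sin t • e`, with `e` of
norm `ρ` orthogonal to `x - p`, this functional is
`cos t * ⟪x - p, q - p⟫ + sin t * ⟪e, q - p⟫` up to a constant, and a local maximum at `t = 0`
forces `⟪e, q - p⟫ = 0` and `0 ≤ ⟪x - p, q - p⟫`. Letting `e` vary, `q - p` is a nonnegative
multiple of `x - p`.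
-/

open Filter Metric Real Topology
open scoped RealInnerProductSpace

section Trigonometric

variable {a b : ℝ}

lemma sin_coeff_eq_zero_of_isLocalMax (h : IsLocalMax (fun t ↦ cos t * a + sin t * b) 0) :
    b = 0 := by
  have hderiv : HasDerivAt (fun t ↦ cos t * a + sin t * b) (-sin 0 * a + cos 0 * b) 0 :=
    ((hasDerivAt_cos 0).mul_const a).add ((hasDerivAt_sin 0).mul_const b)
  simpa using h.hasDerivAt_eq_zero hderiv

lemma cos_coeff_nonneg_of_isLocalMax (h : IsLocalMax (fun t ↦ cos t * a + sin t * b) 0) :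
    0 ≤ a := by
  obtain rfl := sin_coeff_eq_zero_of_isLocalMax h
  have hle : ∀ᶠ t in 𝓝[>] (0 : ℝ), cos t * a ≤ a := by
    filter_upwards [h.filter_mono nhdsWithin_le_nhds] with t ht
    simpa using ht
  obtain ⟨t, hta, ht0, htpi⟩ := (hle.and (Ioo_mem_nhdsGT pi_pos)).exists
  have hcos : cos t < 1 := by
    simpa using cos_lt_cos_of_nonneg_of_le_pi le_rfl htpi.le ht0
  nlinarith

end Trigonometric

section InnerProductSpace

variable {E : Type*} [NormedAddCommGroup E] [InnerProductSpace ℝ E]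

lemma norm_cos_smul_add_sin_smul {u e : E} (he : ‖e‖ = ‖u‖) (hue : ⟪u, e⟫ = 0) (t : ℝ) :
    ‖cos t • u + sin t • e‖ = ‖u‖ := by
  have hort : ⟪cos t • u, sin t • e⟫ = 0 := by
    rw [real_inner_smul_left, real_inner_smul_right, hue, mul_zero, mul_zero]
  rw [← sq_eq_sq₀ (norm_nonneg _) (norm_nonneg _), norm_add_sq_real, hort, norm_smul, norm_smul,
    he, mul_pow, mul_pow, norm_eq_abs, norm_eq_abs, sq_abs, sq_abs]
  linear_combination ‖u‖ ^ 2 * cos_sq_add_sin_sq t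

lemma dist_le_dist_iff_inner_le_inner_of_mem_sphere {p q x y : E} {r : ℝ}
    (hx : x ∈ sphere p r) (hy : y ∈ sphere p r) :
    dist x q ≤ dist y q ↔ ⟪y, q - p⟫ ≤ ⟪x, q - p⟫ := by
  have dist_sq (z : E) (hz : z ∈ sphere p r) :
      dist z q ^ 2 = r ^ 2 - 2 * (⟪z, q - p⟫ - ⟪p, q - p⟫) + ‖q - p‖ ^ 2 := by
    rw [dist_eq_norm, ← sub_sub_sub_cancel_right z q p, norm_sub_sq_real, inner_sub_left,
      mem_sphere_iff_norm.mp hz]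
  rw [← sq_le_sq₀ dist_nonneg dist_nonneg, dist_sq x hx, dist_sq y hy]
  constructor <;> intro h <;> linarith

lemma exists_ne_zero_inner_eq_zero (hE : 1 < Module.rank ℝ E) (u : E) :
    ∃ e : E, e ≠ 0 ∧ ⟪u, e⟫ = 0 := by
  have hspan : (ℝ ∙ u) ≠ ⊤ := by
    intro htop
    have hrank := rank_span_le (R := ℝ) ({u} : Set E)
    rw [htop, rank_top, Cardinal.mk_singleton] at hrank
    exact hrank.not_gt hE
  obtain ⟨e, he, he0⟩ := Submodule.exists_mem_ne_zero_of_ne_bot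
    (mt Submodule.orthogonal_eq_bot_iff.mp hspan)
  exact ⟨e, he0, Submodule.mem_orthogonal_singleton_iff_inner_right.mp he⟩

variable {p v x : E} {r : ℝ}

lemma isLocalMax_cos_mul_inner_add_sin_mul_inner {e : E} (hx : x ∈ sphere p r)
    (hmax : IsLocalMaxOn (⟪·, v⟫) (sphere p r) x) (he : ‖e‖ = ‖x - p‖) (hxe : ⟪x - p, e⟫ = 0) :
    IsLocalMax (fun t ↦ cos t * ⟪x - p, v⟫ + sin t * ⟪e, v⟫) 0 := by
  let γ : ℝ → E := fun t ↦ p + (cos t • (x - p) + sin t • e)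
  have hγ0 : γ 0 = x := by simp [γ]
  have hγmem (t : ℝ) : γ t ∈ sphere p r := by
    rw [mem_sphere_iff_norm, add_sub_cancel_left, norm_cos_smul_add_sin_smul he hxe]
    exact mem_sphere_iff_norm.mp hx
  have hγlim : Tendsto γ (𝓝 0) (𝓝[sphere p r] x) := by
    have hγcont : Continuous γ := by fun_prop
    exact tendsto_nhdsWithin_iff.mpr ⟨hγ0 ▸ hγcont.tendsto 0, .of_forall hγmem⟩
  filter_upwards [hγlim.eventually hmax] with t ht
  rw [← hγ0] at ht
  simp only [γ, inner_add_left, real_inner_smul_left] at ht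
  exact le_of_add_le_add_left ht

lemma inner_eq_zero_and_nonneg_of_isLocalMaxOn_sphere {e : E} (hx : x ∈ sphere p r)
    (hmax : IsLocalMaxOn (⟪·, v⟫) (sphere p r) x) (hxp : x ≠ p) (he : e ≠ 0)
    (hxe : ⟪x - p, e⟫ = 0) :
    ⟪e, v⟫ = 0 ∧ 0 ≤ ⟪x - p, v⟫ := by
  have hc : ‖x - p‖ / ‖e‖ ≠ 0 :=
    div_ne_zero (norm_ne_zero_iff.mpr (sub_ne_zero.mpr hxp)) (norm_ne_zero_iff.mpr he)
  have hnorm : ‖(‖x - p‖ / ‖e‖) • e‖ = ‖x - p‖ := by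
    rw [norm_smul, norm_div, norm_norm, norm_norm, div_mul_cancel₀ _ (norm_ne_zero_iff.mpr he)]
  have hort : ⟪x - p, (‖x - p‖ / ‖e‖) • e⟫ = 0 := by rw [real_inner_smul_right, hxe, mul_zero]
  have hcircle := isLocalMax_cos_mul_inner_add_sin_mul_inner hx hmax hnorm hort
  refine ⟨?_, cos_coeff_nonneg_of_isLocalMax hcircle⟩
  have hzero := sin_coeff_eq_zero_of_isLocalMax hcircle
  rw [real_inner_smul_left] at hzero
  exact (mul_eq_zero.mp hzero).resolve_left hc

theorem sameRay_sub_of_isLocalMaxOn_inner_sphere (hE : 1 < Module.rank ℝ E)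
    (hx : x ∈ sphere p r) (hmax : IsLocalMaxOn (⟪·, v⟫) (sphere p r) x) :
    SameRay ℝ (x - p) v := by
  obtain rfl | hxp := eq_or_ne x p
  · rw [sub_self]
    exact SameRay.zero_left v
  have hcrit {e : E} := inner_eq_zero_and_nonneg_of_isLocalMaxOn_sphere (e := e) hx hmax hxp
  have hv : v ∈ ℝ ∙ (x - p) := by
    rw [← Submodule.orthogonal_orthogonal (ℝ ∙ (x - p)), Submodule.mem_orthogonal]
    intro e he
    obtain rfl | he0 := eq_or_ne e 0
    · exact inner_zero_left v
    · exact (hcrit he0 (Submodule.mem_orthogonal_singleton_iff_inner_right.mp he)).1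
  obtain ⟨c, rfl⟩ := Submodule.mem_span_singleton.mp hv
  obtain ⟨e, he0, hxe⟩ := exists_ne_zero_inner_eq_zero hE (x - p)
  have hc : 0 ≤ c * ⟪x - p, x - p⟫ := by
    rw [← real_inner_smul_right]
    exact (hcrit he0 hxe).2
  exact SameRay.sameRay_nonneg_smul_right _
    (nonneg_of_mul_nonneg_left hc (real_inner_self_pos.mpr (sub_ne_zero.mpr hxp)))

theorem stmt_10_general (hE : 1 < Module.rank ℝ E) {q : E} (hpq : p ≠ q) (hx : x ∈ sphere p r)
    (hmin : IsLocalMinOn (fun y ↦ ‖y - q‖) (sphere p r) x) :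
    x = p + (r / ‖q - p‖) • (q - p) := by
  have hmax : IsLocalMaxOn (⟪·, q - p⟫) (sphere p r) x := by
    filter_upwards [hmin, self_mem_nhdsWithin] with y hxy hy
    rw [← dist_eq_norm, ← dist_eq_norm] at hxy
    exact (dist_le_dist_iff_inner_le_inner_of_mem_sphere hx hy).mp hxy
  have hray := (sameRay_sub_of_isLocalMaxOn_inner_sphere hE hx hmax).norm_smul_eq
  rw [mem_sphere_iff_norm.mp hx] at hray
  have hqp : ‖q - p‖ ≠ 0 := norm_ne_zero_iff.mpr (sub_ne_zero.mpr hpq.symm)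
  rw [div_eq_inv_mul, mul_smul, hray, inv_smul_smul₀ hqp, add_sub_cancel]

end InnerProductSpace

/-- On the sphere S of radius ρ > 0 centered at p (in ℝ^d, d ≥ 2, p ≠ q),
any local minimum x of y ↦ ‖y − q‖ restricted to S equals p + ρ·(q − p)/‖q − p‖. -/
theorem stmt_10 {d : ℕ} (hd : 2 ≤ d)
    (p q : EuclideanSpace ℝ (Fin d)) (hpq : p ≠ q) (ρ : ℝ) (hρ : 0 < ρ)
    (x : EuclideanSpace ℝ (Fin d)) (hx : x ∈ Metric.sphere p ρ)
    (U : Set (EuclideanSpace ℝ (Fin d))) (hU : U ∈ nhds x)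
    (hmin : ∀ y ∈ Metric.sphere p ρ ∩ U, ‖x - q‖ ≤ ‖y - q‖) :
    x = p + (ρ / ‖q - p‖) • (q - p) := by
  have hrank : 1 < Module.rank ℝ (EuclideanSpace ℝ (Fin d)) :=
    Module.one_lt_rank_of_one_lt_finrank (by rwa [finrank_euclideanSpace_fin])
  exact stmt_10_general hrank hpq hx (mem_of_superset (inter_mem_nhdsWithin _ hU) hmin)
end

section
/- Anti-bridge lemma, first part: for every point x of the anti-bridge of (V, p, q), setting s := ‖x − p‖², the point x maximizes the distance to q over V ∩ B_s(p); that is, ‖y − q‖ ≤ ‖x − q‖ for every y ∈ V ∩ B_s(p). -/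
/- On the anti-bridge, `p` lies on the segment from `q` to `x`, so `dist x q = dist x p + dist p q`:
equality holds in the triangle inequality through `p` that bounds `dist y q` for any other `y`. -/

theorem wbtw_add_smul_sub {R E : Type*} [Field R] [LinearOrder R] [IsStrictOrderedRing R]
    [AddCommGroup E] [Module R E] (p q : E) {t : R} (ht : 0 ≤ t) :
    Wbtw R q p (p + t • (p - q)) := by
  rw [wbtw_iff_sameRay_vsub, vsub_eq_sub, vsub_eq_sub, add_sub_cancel_left]
  exact SameRay.sameRay_nonneg_smul_right _ ht

theorem closedBall_subset_closedBall_of_wbtw {E P : Type*} [SeminormedAddCommGroup E]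
    [NormedSpace ℝ E] [PseudoMetricSpace P] [NormedAddTorsor E P] {p q x : P}
    (h : Wbtw ℝ q p x) :
    Metric.closedBall p (dist x p) ⊆ Metric.closedBall q (dist x q) :=
  Metric.closedBall_subset_closedBall' h.symm.dist_add_dist.le

theorem stmt_12_general {E : Type*} [SeminormedAddCommGroup E] [NormedSpace ℝ E] {p q x : E}
    {t : ℝ} (ht : 0 ≤ t) (hxray : x = p + t • (p - q)) :
    ∀ y ∈ Metric.closedBall p ‖x - p‖, ‖y - q‖ ≤ ‖x - q‖ := by
  intro y hy
  have hbtw : Wbtw ℝ q p x := hxray ▸ wbtw_add_smul_sub p q ht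
  simp only [← dist_eq_norm] at hy ⊢
  exact closedBall_subset_closedBall_of_wbtw hbtw hy

/-- Anti-bridge lemma, first part. For every point x of the anti-bridge
V ∩ {p + t(p − q) : t ≥ 0} of (V, p, q), setting s := ‖x − p‖², the point x maximizes
the distance to q over V ∩ B_s(p). -/
theorem stmt_12 {d : ℕ} (V : Set (EuclideanSpace ℝ (Fin d)))
    (hVne : V.Nonempty) (hVcl : IsClosed V) (hVcx : Convex ℝ V)
    (p q : EuclideanSpace ℝ (Fin d)) (hpq : p ≠ q)
    (x : EuclideanSpace ℝ (Fin d)) (hxV : x ∈ V)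
    (t : ℝ) (ht : 0 ≤ t) (hxray : x = p + t • (p - q)) :
    ∀ y ∈ V ∩ Metric.closedBall p (Real.sqrt (‖x - p‖ ^ 2)), ‖y - q‖ ≤ ‖x - q‖ := by
  rw [Real.sqrt_sq (norm_nonneg _)]
  exact fun y hy ↦ stmt_12_general ht hxray y hy.2
end

section
/- Define e : [s0, s1] → ℝ by e(s) := ‖q − γ_s‖². Then e is continuous and nonincreasing, e(s1) = r1, and for every s ∈ [s0, s1] and every r ≥ 0, V ∩ B_s(p) ∩ B_r(q) ≠ ∅ if and only if r ≥ e(s). (That is, e(s) is the minimal r-value for which the intersection is nonempty, equal to the squared distance of q to the set V ∩ B_s(p).) -/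
/-!
Let `x₀` be a nearest point of `V` to `p`, and for `s ≥ ‖p - x₀‖²` put
`K s = V ∩ closedBall p √s`, so that `e s = (infDist q (K s))²`. The sets `K s` grow with `s`, so
`e` is nonincreasing. For continuity, write `s ≤ t` as `s = (1 - a) t + a ‖p - x₀‖²` and push
`x ∈ K t` towards `x₀` by the ratio `a`: convexity of `V` and of `‖p - ·‖²` puts the result in
`K s`, and the obtuse angle at `x₀` gives `‖x - x₀‖² ≤ t - ‖p - x₀‖²`, so `x` moves by at
most `√(t - s)`. Thus `K` is `1/2`-Hölder for the Hausdorff distance, and so is its distance to `q`.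
-/

open Metric Set

section PseudoMetricSpace

variable {α : Type*} [PseudoMetricSpace α] {K : Set α} {x y : α}

theorem infDist_eq_dist_of_forall_dist_le (hy : y ∈ K) (hmin : ∀ z ∈ K, dist x y ≤ dist x z) :
    infDist x K = dist x y :=
  le_antisymm (infDist_le_dist_of_mem hy) ((le_infDist ⟨y, hy⟩).2 hmin)

theorem inter_closedBall_nonempty_iff_dist_le (hy : y ∈ K) (hmin : infDist x K = dist x y) {r : ℝ} :
    (K ∩ closedBall x r).Nonempty ↔ dist x y ≤ r := by
  constructor
  · rintro ⟨z, hzK, hzr⟩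
    calc dist x y = infDist x K := hmin.symm
      _ ≤ dist x z := infDist_le_dist_of_mem hzK
      _ ≤ r := mem_closedBall'.1 hzr
  · exact fun h => ⟨y, hy, mem_closedBall'.2 h⟩

theorem mem_closedBall_sqrt_of_dist_sq_le {s : ℝ} (h : dist x y ^ 2 ≤ s) :
    y ∈ closedBall x √s :=
  mem_closedBall'.2 (Real.le_sqrt_of_sq_le h)

theorem dist_sq_le_of_mem_closedBall_sqrt {s : ℝ} (hs : 0 ≤ s) (h : y ∈ closedBall x √s) :
    dist x y ^ 2 ≤ s :=
  (Real.le_sqrt dist_nonneg hs).1 (mem_closedBall'.1 h)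

theorem antitoneOn_infDist_inter_closedBall_sqrt (p : α) (hy : y ∈ K) :
    AntitoneOn (fun s : ℝ => infDist x (K ∩ closedBall p √s)) (Ici (dist p y ^ 2)) :=
  fun _ hs _ _ hst => infDist_le_infDist_of_subset
    (inter_subset_inter_right K (closedBall_subset_closedBall (Real.sqrt_le_sqrt hst)))
    ⟨y, hy, mem_closedBall_sqrt_of_dist_sq_le hs⟩

end PseudoMetricSpace

section NormedSpace

variable {E : Type*} [SeminormedAddCommGroup E] [NormedSpace ℝ E]

theorem convexOn_univ_dist_sq (p : E) : ConvexOn ℝ univ (fun x => dist p x ^ 2) := by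
  simpa only [Pi.pow_def, dist_comm p] using (convexOn_univ_dist p).pow (fun _ _ => dist_nonneg) 2

theorem dist_sq_lineMap_le (p x y : E) {a : ℝ} (ha : a ∈ Icc (0 : ℝ) 1) :
    dist p (AffineMap.lineMap x y a) ^ 2 ≤ AffineMap.lineMap (dist p x ^ 2) (dist p y ^ 2) a := by
  simpa only [AffineMap.lineMap_apply_module] using (convexOn_univ_dist_sq p).2 (mem_univ x)
    (mem_univ y) (sub_nonneg.2 ha.2) ha.1 (sub_add_cancel 1 a)

end NormedSpace

section InnerProductSpace

variable {E : Type*} [NormedAddCommGroup E] [InnerProductSpace ℝ E] {V : Set E} {p x₀ : E}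

theorem dist_sq_add_dist_sq_le_of_infDist_eq_dist (hV : Convex ℝ V) (hx₀ : x₀ ∈ V)
    (hmin : infDist p V = dist p x₀) {x : E} (hx : x ∈ V) :
    dist p x₀ ^ 2 + dist x x₀ ^ 2 ≤ dist p x ^ 2 := by
  have obtuse : inner ℝ (p - x₀) (x - x₀) ≤ 0 := by
    refine (norm_eq_iInf_iff_real_inner_le_zero hV hx₀).1 ?_ x hx
    simpa only [dist_eq_norm, infDist_eq_iInf] using hmin.symm
  have cosine_rule := norm_sub_sq_real (p - x₀) (x - x₀)
  rw [sub_sub_sub_cancel_right] at cosine_rule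
  simp only [dist_eq_norm]
  linarith

theorem exists_mem_inter_closedBall_sqrt_dist_le (hV : Convex ℝ V) (hx₀ : x₀ ∈ V)
    (hmin : infDist p V = dist p x₀) {s t : ℝ} (hs : dist p x₀ ^ 2 ≤ s) (hst : s ≤ t) {x : E}
    (hx : x ∈ V ∩ closedBall p √t) :
    ∃ z ∈ V ∩ closedBall p √s, dist x z ≤ √(t - s) := by
  set s₀ := dist p x₀ ^ 2
  obtain ⟨a, ha, rfl⟩ : s ∈ AffineMap.lineMap t s₀ '' Icc (0 : ℝ) 1 := by
    rw [← segment_eq_image_lineMap, segment_symm, segment_eq_Icc (hs.trans hst)]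
    exact ⟨hs, hst⟩
  have hxt : dist p x ^ 2 ≤ t :=
    dist_sq_le_of_mem_closedBall_sqrt ((sq_nonneg _).trans (hs.trans hst)) hx.2
  have hxx₀ : dist x x₀ ^ 2 ≤ t - s₀ := by
    linarith [dist_sq_add_dist_sq_le_of_infDist_eq_dist hV hx₀ hmin hx.1]
  refine ⟨AffineMap.lineMap x x₀ a,
    ⟨hV.lineMap_mem hx.1 hx₀ ha, mem_closedBall_sqrt_of_dist_sq_le ?_⟩, Real.le_sqrt_of_sq_le ?_⟩
  · exact (dist_sq_lineMap_le p x x₀ ha).trans (lineMap_mono_left hxt ha.2)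
  · calc dist x (AffineMap.lineMap x x₀ a) ^ 2 = a ^ 2 * dist x x₀ ^ 2 := by
          rw [dist_left_lineMap, Real.norm_of_nonneg ha.1, mul_pow]
      _ ≤ a * (t - s₀) :=
          mul_le_mul (pow_le_of_le_one ha.1 ha.2 two_ne_zero) hxx₀ (sq_nonneg _) ha.1
      _ = t - AffineMap.lineMap t s₀ a := by
          rw [AffineMap.lineMap_apply_ring']
          ring

theorem hausdorffDist_inter_closedBall_sqrt_le (hV : Convex ℝ V) (hx₀ : x₀ ∈ V)
    (hmin : infDist p V = dist p x₀) {s t : ℝ} (hs : dist p x₀ ^ 2 ≤ s) (hst : s ≤ t) :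
    hausdorffDist (V ∩ closedBall p √s) (V ∩ closedBall p √t) ≤ √(t - s) := by
  refine hausdorffDist_le_of_mem_dist (Real.sqrt_nonneg _) (fun x hx => ⟨x, ?_, ?_⟩)
    fun x hx => exists_mem_inter_closedBall_sqrt_dist_le hV hx₀ hmin hs hst hx
  · exact ⟨hx.1, closedBall_subset_closedBall (Real.sqrt_le_sqrt hst) hx.2⟩
  · simp only [dist_self, Real.sqrt_nonneg]

theorem infDist_inter_closedBall_sqrt_le_add (hV : Convex ℝ V) (hx₀ : x₀ ∈ V)
    (hmin : infDist p V = dist p x₀) (q : E) {s t : ℝ} (hs : dist p x₀ ^ 2 ≤ s) (hst : s ≤ t) :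
    infDist q (V ∩ closedBall p √s) ≤ infDist q (V ∩ closedBall p √t) + √(t - s) := by
  have hne {u : ℝ} (hu : dist p x₀ ^ 2 ≤ u) : (V ∩ closedBall p √u).Nonempty :=
    ⟨x₀, hx₀, mem_closedBall_sqrt_of_dist_sq_le hu⟩
  have hbdd (u : ℝ) : Bornology.IsBounded (V ∩ closedBall p √u) :=
    isBounded_closedBall.subset inter_subset_right
  have hfin := hausdorffEDist_ne_top_of_nonempty_of_bounded (hne (hs.trans hst)) (hne hs)
    (hbdd t) (hbdd s)
  calc infDist q (V ∩ closedBall p √s)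
      ≤ infDist q (V ∩ closedBall p √t)
          + hausdorffDist (V ∩ closedBall p √t) (V ∩ closedBall p √s) :=
        infDist_le_infDist_add_hausdorffDist hfin
    _ ≤ infDist q (V ∩ closedBall p √t) + √(t - s) := by
        rw [hausdorffDist_comm]
        gcongr
        exact hausdorffDist_inter_closedBall_sqrt_le hV hx₀ hmin hs hst

theorem holderOnWith_infDist_inter_closedBall_sqrt (hV : Convex ℝ V) (hx₀ : x₀ ∈ V)
    (hmin : infDist p V = dist p x₀) (q : E) :
    HolderOnWith 1 (1 / 2) (fun s : ℝ => infDist q (V ∩ closedBall p √s))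
      (Ici (dist p x₀ ^ 2)) := by
  intro s hs t ht
  wlog hst : s ≤ t generalizing s t
  · rw [edist_comm, edist_comm s]
    exact this t ht s hs (le_of_not_ge hst)
  have hle := infDist_inter_closedBall_sqrt_le_add hV hx₀ hmin q hs hst
  have hanti := antitoneOn_infDist_inter_closedBall_sqrt (x := q) p hx₀ hs ht hst
  have hdist : dist (infDist q (V ∩ closedBall p √s)) (infDist q (V ∩ closedBall p √t)) ≤
      √(dist s t) := by
    rw [Real.dist_eq, abs_of_nonneg (sub_nonneg.2 hanti), dist_comm, Real.dist_eq,
      abs_of_nonneg (sub_nonneg.2 hst)]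
    exact sub_le_iff_le_add'.2 hle
  rw [edist_dist, edist_dist, ENNReal.coe_one, one_mul,
    ENNReal.ofReal_rpow_of_nonneg dist_nonneg (NNReal.coe_nonneg _)]
  exact ENNReal.ofReal_le_ofReal (by simpa [Real.sqrt_eq_rpow] using hdist)

end InnerProductSpace

theorem stmt_16_general {E : Type*} [NormedAddCommGroup E] [InnerProductSpace ℝ E]
    {V : Set E} (hVcx : Convex ℝ V) {p q phat qhat : E}
    (hphat_mem : phat ∈ V) (hphat_min : ∀ y ∈ V, ‖p - phat‖ ≤ ‖p - y‖)
    (hqhat_mem : qhat ∈ V) (hqhat_min : ∀ y ∈ V, ‖q - qhat‖ ≤ ‖q - y‖)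
    {s0 s1 r1 : ℝ} (hs0 : s0 = ‖p - phat‖ ^ 2) (hs1 : s1 = ‖p - qhat‖ ^ 2)
    (hr1 : r1 = ‖q - qhat‖ ^ 2) {γ : ℝ → E}
    (hγmem : ∀ s ∈ Icc s0 s1, γ s ∈ V ∩ closedBall p √s)
    (hγmin : ∀ s ∈ Icc s0 s1, ∀ y ∈ V ∩ closedBall p √s, ‖q - γ s‖ ≤ ‖q - y‖)
    {e : ℝ → ℝ} (he : ∀ s ∈ Icc s0 s1, e s = ‖q - γ s‖ ^ 2) :
    ContinuousOn e (Icc s0 s1) ∧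
    AntitoneOn e (Icc s0 s1) ∧
    e s1 = r1 ∧
    ∀ s ∈ Icc s0 s1, ∀ r : ℝ, 0 ≤ r →
      ((V ∩ closedBall p √s ∩ closedBall q √r).Nonempty ↔ e s ≤ r) := by
  have hpmin : infDist p V = dist p phat :=
    infDist_eq_dist_of_forall_dist_le hphat_mem (by simpa only [dist_eq_norm] using hphat_min)
  have hγdist : ∀ s ∈ Icc s0 s1, infDist q (V ∩ closedBall p √s) = dist q (γ s) := fun s hs =>
    infDist_eq_dist_of_forall_dist_le (hγmem s hs) (by simpa only [dist_eq_norm] using hγmin s hs)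
  have he_infDist : EqOn (fun s => infDist q (V ∩ closedBall p √s) ^ 2) e (Icc s0 s1) :=
    fun s hs => by simp only [hγdist s hs, he s hs, dist_eq_norm]
  have hIcc : Icc s0 s1 ⊆ Ici (dist p phat ^ 2) := by
    simpa only [dist_eq_norm, ← hs0] using Icc_subset_Ici_self
  have hs1_mem : s1 ∈ Icc s0 s1 := by
    rw [right_mem_Icc, hs0, hs1]
    exact pow_le_pow_left₀ (norm_nonneg _) (hphat_min qhat hqhat_mem) 2
  refine ⟨?_, ?_, ?_, fun s hs r hr => ?_⟩
  · have hholder := holderOnWith_infDist_inter_closedBall_sqrt hVcx hphat_mem hpmin q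
    exact (((hholder.mono hIcc).continuousOn (by norm_num)).pow 2).congr he_infDist.symm
  · refine AntitoneOn.congr (fun s hs t ht hst => ?_) he_infDist
    exact pow_le_pow_left₀ infDist_nonneg
      (antitoneOn_infDist_inter_closedBall_sqrt p hphat_mem (hIcc hs) (hIcc ht) hst) 2
  · have hqhat_ball : qhat ∈ closedBall p √s1 :=
      mem_closedBall_sqrt_of_dist_sq_le (by rw [dist_eq_norm, hs1])
    rw [he s1 hs1_mem, hr1, le_antisymm (hγmin s1 hs1_mem qhat ⟨hqhat_mem, hqhat_ball⟩)
      (hqhat_min _ (hγmem s1 hs1_mem).1)]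
  · rw [inter_closedBall_nonempty_iff_dist_le (hγmem s hs) (hγdist s hs), he s hs,
      ← dist_eq_norm, Real.le_sqrt dist_nonneg hr]

/-- Define e(s) := ‖q − γ_s‖² on [s0, s1]. Then e is continuous and
nonincreasing, e(s1) = r1, and for every s ∈ [s0, s1] and every r ≥ 0,
V ∩ B_s(p) ∩ B_r(q) ≠ ∅ iff r ≥ e(s). -/
theorem stmt_16 {d : ℕ} (V : Set (EuclideanSpace ℝ (Fin d)))
    (hVne : V.Nonempty) (hVcl : IsClosed V) (hVcx : Convex ℝ V)
    (p q phat qhat : EuclideanSpace ℝ (Fin d))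
    (hphat_mem : phat ∈ V) (hphat_min : ∀ y ∈ V, ‖p - phat‖ ≤ ‖p - y‖)
    (hqhat_mem : qhat ∈ V) (hqhat_min : ∀ y ∈ V, ‖q - qhat‖ ≤ ‖q - y‖)
    (s0 s1 r1 : ℝ)
    (hs0 : s0 = ‖p - phat‖ ^ 2) (hs1 : s1 = ‖p - qhat‖ ^ 2) (hr1 : r1 = ‖q - qhat‖ ^ 2)
    (γ : ℝ → EuclideanSpace ℝ (Fin d))
    (hγmem : ∀ s ∈ Set.Icc s0 s1, γ s ∈ V ∩ Metric.closedBall p (Real.sqrt s))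
    (hγmin : ∀ s ∈ Set.Icc s0 s1,
      ∀ y ∈ V ∩ Metric.closedBall p (Real.sqrt s), ‖q - γ s‖ ≤ ‖q - y‖)
    (e : ℝ → ℝ) (he : ∀ s ∈ Set.Icc s0 s1, e s = ‖q - γ s‖ ^ 2) :
    ContinuousOn e (Set.Icc s0 s1) ∧
    AntitoneOn e (Set.Icc s0 s1) ∧
    e s1 = r1 ∧
    ∀ s ∈ Set.Icc s0 s1, ∀ r : ℝ, 0 ≤ r →
      ((V ∩ Metric.closedBall p (Real.sqrt s) ∩ Metric.closedBall q (Real.sqrt r)).Nonempty ↔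
        e s ≤ r) :=
  stmt_16_general hVcx hphat_mem hphat_min hqhat_mem hqhat_min hs0 hs1 hr1 hγmem hγmin he
end

section
/- For all s, r ≥ 0, the intersection I_s ∩ J_r is nonempty if and only if r + s ≥ 1. Moreover, the region R := {(s, r) ∈ [0,∞)² : r + s ≥ 1} is not a finite union of upper-right quadrants: there is no finite set F ⊆ ℝ² such that R = ⋃_{(a,b) ∈ F} {(s, r) ∈ [0,∞)² : s ≥ a and r ≥ b}. -/
/-!
A union of upper-right quadrants contains no minimal element other than the corners of the
quadrants. Every point of the segment from `(0, d)` to `(d, 0)` is minimal in the region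
`d ≤ s + r` of `[0, ∞)²`, so for `0 < d` even countably many quadrants are too few.
-/

open Set Metric

theorem mem_of_minimal_mem_upperClosure {α : Type*} [PartialOrder α] {s : Set α} {x : α}
    (hx : Minimal (· ∈ upperClosure s) x) : x ∈ s := by
  obtain ⟨a, ha, hax⟩ := mem_upperClosure.mp hx.prop
  rwa [hx.eq_of_ge (subset_upperClosure ha) hax]

theorem biUnion_Ici_inter_Ici_eq_upperClosure {α : Type*} [SemilatticeSup α] (c : α) (F : Set α) :
    ⋃ a ∈ F, Ici c ∩ Ici a = upperClosure ((c ⊔ ·) '' F) := by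
  simp only [Ici_inter_Ici, coe_upperClosure, biUnion_image]

theorem countable_setOf_minimal_mem_biUnion_Ici_inter_Ici {α : Type*} [SemilatticeSup α]
    {F : Set α} (hF : F.Countable) (c : α) :
    {x | Minimal (· ∈ ⋃ a ∈ F, Ici c ∩ Ici a) x}.Countable := by
  rw [biUnion_Ici_inter_Ici_eq_upperClosure]
  exact (hF.image _).mono fun _ hx ↦ mem_of_minimal_mem_upperClosure hx

/-- The pairs of nonnegative radii with sum at least `d`. In a real normed space these are the
radii at which closed balls whose centers lie at distance `d` intersect. -/
def overlapRegion {α : Type*} [AddZeroClass α] [LE α] (d : α) : Set (α × α) :=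
  {x | 0 ≤ x.1 ∧ 0 ≤ x.2 ∧ d ≤ x.1 + x.2}

theorem minimal_mem_overlapRegion {α : Type*} [AddCommGroup α] [PartialOrder α]
    [IsOrderedAddMonoid α] {d t : α} (ht : t ∈ Icc 0 d) :
    Minimal (· ∈ overlapRegion d) (t, d - t) := by
  refine ⟨⟨ht.1, sub_nonneg.mpr ht.2, (add_sub_cancel t d).ge⟩, ?_⟩
  rintro ⟨s, r⟩ ⟨-, -, hd : d ≤ s + r⟩ ⟨hs : s ≤ t, hr : r ≤ d - t⟩
  constructor
  · calc
      t = d - (d - t) := (sub_sub_cancel d t).symm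
      _ ≤ d - r := by gcongr
      _ ≤ s := sub_le_iff_le_add.mpr hd
  · calc
      d - t ≤ d - s := by gcongr
      _ ≤ r := sub_le_iff_le_add'.mpr hd

theorem not_countable_setOf_minimal_mem_overlapRegion {d : ℝ} (hd : 0 < d) :
    ¬ {x | Minimal (· ∈ overlapRegion d) x}.Countable := by
  intro h
  have h_subset : Icc 0 d ⊆ Prod.fst '' {x | Minimal (· ∈ overlapRegion d) x} :=
    fun t ht ↦ ⟨(t, d - t), minimal_mem_overlapRegion ht, rfl⟩
  exact hd.not_ge (Cardinal.Real.Icc_countable_iff.mp ((h.image _).mono h_subset))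

theorem overlapRegion_ne_biUnion_Ici_inter_Ici {d : ℝ} (hd : 0 < d) {F : Set (ℝ × ℝ)}
    (hF : F.Countable) : overlapRegion d ≠ ⋃ a ∈ F, Ici 0 ∩ Ici a := by
  intro h
  apply not_countable_setOf_minimal_mem_overlapRegion hd
  rw [h]
  exact countable_setOf_minimal_mem_biUnion_Ici_inter_Ici hF 0

theorem closedBall_inter_closedBall_nonempty_iff {E : Type*} [SeminormedAddCommGroup E]
    [NormedSpace ℝ E] {p c : E} {s r : ℝ} (hs : 0 ≤ s) (hr : 0 ≤ r) :
    (closedBall p s ∩ closedBall c r).Nonempty ↔ dist p c ≤ s + r := by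
  rw [← not_disjoint_iff_nonempty_inter, disjoint_closedBall_closedBall_iff hs hr, not_lt]

theorem stmt_18_general {E : Type*} [SeminormedAddCommGroup E] [NormedSpace ℝ E] {p c : E}
    (hpc : 0 < dist p c) :
    (∀ s r : ℝ, 0 ≤ s → 0 ≤ r →
      ((closedBall p s ∩ closedBall c r).Nonempty ↔ dist p c ≤ r + s)) ∧
    ¬ ∃ F : Set (ℝ × ℝ), F.Countable ∧
      overlapRegion (dist p c) = ⋃ ab ∈ F, Ici 0 ∩ Ici ab := by
  refine ⟨fun s r hs hr ↦ ?_, fun ⟨F, hF, h⟩ ↦ overlapRegion_ne_biUnion_Ici_inter_Ici hpc hF h⟩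
  rw [closedBall_inter_closedBall_nonempty_iff hs hr, add_comm]

/-- In ℝ with I_s = [1−s, 1+s] and J_r = [−r, r]: for all s, r ≥ 0,
I_s ∩ J_r ≠ ∅ iff r + s ≥ 1; moreover the region R = {(s,r) ∈ [0,∞)² : r + s ≥ 1}
is not a finite union of upper-right quadrants. -/
theorem stmt_18 :
    (∀ s r : ℝ, 0 ≤ s → 0 ≤ r →
      ((Set.Icc (1 - s) (1 + s) ∩ Set.Icc (-r) r).Nonempty ↔ 1 ≤ r + s)) ∧
    ¬ ∃ F : Set (ℝ × ℝ), F.Finite ∧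
      {x : ℝ × ℝ | 0 ≤ x.1 ∧ 0 ≤ x.2 ∧ 1 ≤ x.1 + x.2} =
        ⋃ ab ∈ F, {x : ℝ × ℝ | 0 ≤ x.1 ∧ 0 ≤ x.2 ∧ ab.1 ≤ x.1 ∧ ab.2 ≤ x.2} := by
  obtain ⟨h_inter, h_union⟩ := stmt_18_general (p := (1 : ℝ)) (c := 0) (by simp)
  simp only [dist_zero_right, norm_one, Real.closedBall_eq_Icc, zero_sub, zero_add]
    at h_inter h_union
  exact ⟨h_inter, fun ⟨F, hF, h⟩ ↦ h_union ⟨F, hF.countable,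
    h.trans (iUnion₂_congr fun ab _ ↦ ext fun x ↦ and_assoc.symm)⟩⟩
end
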